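/- Let V be a finite set and g : 2^V → ℝ normalized, monotone and submodular with curvature bound k_g ∈ [0,1] (g(V) − g(V \ {v}) ≥ (1 − k_g)·g({v}) for every v ∈ V). Then for any pairwise disjoint sets Δ_1, …, Δ_M ⊆ V, g(Δ_1 ∪ ⋯ ∪ Δ_M) ≥ (1 − k_g) · Σ_{i=1}^{M} g(Δ_i). -/

import Mathlib

/-!
Submodularity means diminishing returns: the gain from adding a point `v` decreases as the set it
is added to grows. Building a set `S` up from `∅` one point at a time, each step therefore gains at
most the gain of `v` over `∅`, and at least the gain of `v` over the ground set without `v`, which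
the curvature bound compares with `g {v}`. The first estimate on each `Δ i` and the second on their
union are linked by `∑ v ∈ ⋃ i, Δ i, g {v} = ∑ i, ∑ v ∈ Δ i, g {v}`.
-/

section Submodular

/-- Submodularity of a function on a lattice; for `L = Finset V` this is submodularity of a set
function. -/
def IsSubmodular {L R : Type*} [Lattice L] [Add R] [LE R] (f : L → R) : Prop :=
  ∀ a b : L, f (a ⊔ b) + f (a ⊓ b) ≤ f a + f b

namespace IsSubmodular

variable {V R : Type*} [DecidableEq V] [AddCommGroup R] [PartialOrder R] [IsOrderedAddMonoid R]
  {g : Finset V → R}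

theorem insert_sub_le_insert_sub (hg : IsSubmodular g) {S T : Finset V} (hST : S ⊆ T) {v : V}
    (hv : v ∉ T) : g (insert v T) - g T ≤ g (insert v S) - g S := by
  have h_union : insert v S ∪ T = insert v T := by
    rw [Finset.insert_union, Finset.union_eq_right.2 hST]
  have h_inter : insert v S ∩ T = S := by
    rw [Finset.insert_inter_of_notMem hv, Finset.inter_eq_left.2 hST]
  have h := hg (insert v S) T
  rw [Finset.sup_eq_union, Finset.inf_eq_inter, h_union, h_inter] at h
  rwa [sub_le_sub_iff]

theorem sub_empty_le_sum_singleton_sub_empty (hg : IsSubmodular g) (S : Finset V) :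
    g S - g ∅ ≤ ∑ v ∈ S, (g {v} - g ∅) := by
  induction S using Finset.induction_on with
  | empty => simp
  | insert v S hv ih =>
    calc g (insert v S) - g ∅ = (g (insert v S) - g S) + (g S - g ∅) :=
          (sub_add_sub_cancel _ _ _).symm
      _ ≤ (g {v} - g ∅) + ∑ w ∈ S, (g {w} - g ∅) :=
          add_le_add (hg.insert_sub_le_insert_sub (Finset.empty_subset S) hv) ih
      _ = ∑ w ∈ insert v S, (g {w} - g ∅) := by rw [Finset.sum_insert hv]

theorem sum_sub_erase_le_sub_empty (hg : IsSubmodular g) {S E : Finset V} (hSE : S ⊆ E) :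
    ∑ v ∈ S, (g E - g (E.erase v)) ≤ g S - g ∅ := by
  induction S using Finset.induction_on with
  | empty => simp
  | insert v S hv ih =>
    obtain ⟨hvE, hSE⟩ := Finset.insert_subset_iff.1 hSE
    have h_gain : g E - g (E.erase v) ≤ g (insert v S) - g S := by
      simpa only [Finset.insert_erase hvE] using
        hg.insert_sub_le_insert_sub (Finset.subset_erase.2 ⟨hSE, hv⟩) (Finset.notMem_erase v E)
    calc ∑ w ∈ insert v S, (g E - g (E.erase w))
        = (g E - g (E.erase v)) + ∑ w ∈ S, (g E - g (E.erase w)) := Finset.sum_insert hv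
      _ ≤ (g (insert v S) - g S) + (g S - g ∅) := add_le_add h_gain (ih hSE)
      _ = g (insert v S) - g ∅ := sub_add_sub_cancel _ _ _

end IsSubmodular

end Submodular

section Curvature

variable {V R : Type*} [DecidableEq V] [Ring R] [PartialOrder R]

/-- `k` is a curvature bound for the set function `g` on the ground set `E`. The ground set is a
finset of `V` rather than `V` itself, so that `V` may be infinite. -/
def IsCurvatureBound (g : Finset V → R) (E : Finset V) (k : R) : Prop :=
  ∀ v ∈ E, (1 - k) * g {v} ≤ g E - g (E.erase v)

variable [IsOrderedRing R] {g : Finset V → R} {E : Finset V} {k : R}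

theorem IsCurvatureBound.mul_sum_singleton_le (hk : IsCurvatureBound g E k)
    (hg : IsSubmodular g) (hg0 : g ∅ = 0) {S : Finset V} (hSE : S ⊆ E) :
    (1 - k) * ∑ v ∈ S, g {v} ≤ g S :=
  calc (1 - k) * ∑ v ∈ S, g {v} = ∑ v ∈ S, (1 - k) * g {v} := Finset.mul_sum _ _ _
    _ ≤ ∑ v ∈ S, (g E - g (E.erase v)) := Finset.sum_le_sum fun v hv => hk v (hSE hv)
    _ ≤ g S - g ∅ := hg.sum_sub_erase_le_sub_empty hSE
    _ = g S := by rw [hg0, sub_zero]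

theorem disjoint_union_curvature_sum_general (hg : IsSubmodular g) (hg0 : g ∅ = 0)
    (hk : IsCurvatureBound g E k) (hk1 : k ≤ 1) {ι : Type*} {s : Finset ι} {Δ : ι → Finset V}
    (hΔ : ∀ i ∈ s, Δ i ⊆ E) (hdisj : (s : Set ι).PairwiseDisjoint Δ) :
    (1 - k) * ∑ i ∈ s, g (Δ i) ≤ g (s.biUnion Δ) := by
  have h_singletons (S : Finset V) : g S ≤ ∑ v ∈ S, g {v} := by
    simpa only [hg0, sub_zero] using hg.sub_empty_le_sum_singleton_sub_empty S
  calc (1 - k) * ∑ i ∈ s, g (Δ i)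
      ≤ (1 - k) * ∑ i ∈ s, ∑ v ∈ Δ i, g {v} :=
        mul_le_mul_of_nonneg_left (Finset.sum_le_sum fun i _ => h_singletons (Δ i))
          (sub_nonneg.2 hk1)
    _ = (1 - k) * ∑ v ∈ s.biUnion Δ, g {v} := by rw [Finset.sum_biUnion hdisj]
    _ ≤ g (s.biUnion Δ) := hk.mul_sum_singleton_le hg hg0 (Finset.biUnion_subset.2 hΔ)

end Curvature

/-- For pairwise disjoint sets `Δ_1, …, Δ_M`,
`g(Δ_1 ∪ ⋯ ∪ Δ_M) ≥ (1 - k_g) · Σ_i g(Δ_i)`. -/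
theorem disjoint_union_curvature_sum
    {V : Type*} [Fintype V] [DecidableEq V]
    (g : Finset V → ℝ)
    (hg0 : g ∅ = 0)
    (hgmono : ∀ A B : Finset V, A ⊆ B → g A ≤ g B)
    (hgsub : ∀ A B : Finset V, g A + g B ≥ g (A ∪ B) + g (A ∩ B))
    (kg : ℝ) (hkg0 : 0 ≤ kg) (hkg1 : kg ≤ 1)
    (hcurv : ∀ v : V, g Finset.univ - g (Finset.univ \ {v}) ≥ (1 - kg) * g {v})
    (M : ℕ) (Δ : Fin M → Finset V)
    (hdisj : ∀ i j : Fin M, i ≠ j → Disjoint (Δ i) (Δ j)) :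
    g (Finset.univ.biUnion Δ) ≥ (1 - kg) * ∑ i : Fin M, g (Δ i) := by
  simp only [Finset.sdiff_singleton_eq_erase] at hcurv
  exact disjoint_union_curvature_sum_general hgsub hg0 (fun v _ => hcurv v) hkg1
    (fun i _ => Finset.subset_univ (Δ i)) fun i _ j _ => hdisj i j
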